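/- On a 6-dimensional hermitian inner product space (V, g, J, ω), for any k-form α with k ≥ 2, (ω∧ω)⎽(α∧ω) = 2(4-k) ω⎽α + ω ∧ ((ω∧ω)⎽α). -/

import Mathlib

namespace FormModel

/-- Components of a `p`-tensor on `ℝ^D` (forms are the alternating ones), with values in `R`. -/
abbrev Form (R : Type) (D p : ℕ) : Type := (Fin p → Fin D) → R

variable {R : Type} [Field R] {D : ℕ}

/-- A tensor is alternating (i.e. a form). -/
def IsAlt {p : ℕ} (α : Form R D p) : Prop :=
  ∀ (σ : Equiv.Perm (Fin p)) (i : Fin p → Fin D),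
    α (i ∘ σ) = ((Equiv.Perm.sign σ : ℤ) : R) * α i

/-- Reinterpret a `p`-form as a `q`-form when `p = q`. -/
def reindex {p q : ℕ} (h : p = q) (α : Form R D p) : Form R D q :=
  fun i => α (i ∘ Fin.cast h)

/-- Wedge product of forms, in components. -/
noncomputable def wedge {p q : ℕ} (α : Form R D p) (β : Form R D q) : Form R D (p + q) :=
  fun i => ((p.factorial * q.factorial : ℕ) : R)⁻¹ *
    ∑ σ : Equiv.Perm (Fin (p + q)), ((Equiv.Perm.sign σ : ℤ) : R) *
      α (fun j => i (σ (Fin.castAdd q j))) * β (fun j => i (σ (Fin.natAdd p j)))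

/-- Contraction `α ⌟ β` of a `k`-form with a `(k+p)`-form (indices raised with the Euclidean
metric): `(α ⌟ β)_{n₁…n_p} = (1/k!) α^{m₁…m_k} β_{m₁…m_k n₁…n_p}`. -/
noncomputable def contr {k p : ℕ} (α : Form R D k) (β : Form R D (k + p)) : Form R D p :=
  fun n => ((k.factorial : ℕ) : R)⁻¹ * ∑ m : Fin k → Fin D, α m * β (Fin.append m n)

/-- The totally antisymmetric `ε` symbol, i.e. the Euclidean volume form. -/
noncomputable def eps : Form R D D :=
  fun f => if h : Function.Injective f then
    ((Equiv.Perm.sign (Equiv.ofBijective f (Finite.injective_iff_bijective.mp h)) : ℤ) : R)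
  else 0

/-- Hodge star of a `p`-form (for `p + q = D`), induced by the Euclidean inner product and the
standard orientation: `(*α)_{n₁…n_q} = (1/p!) α^{m₁…m_p} ε_{m₁…m_p n₁…n_q}`. -/
noncomputable def hstar {p q : ℕ} (h : p + q = D) (α : Form R D p) : Form R D q :=
  fun n => ((p.factorial : ℕ) : R)⁻¹ *
    ∑ m : Fin p → Fin D, α m * eps (Fin.append m n ∘ Fin.cast h.symm)

/-- The action of an almost complex structure `J` (given by its matrix) on `p`-forms. -/
noncomputable def Jact {p : ℕ} (Jc : Matrix (Fin D) (Fin D) R) (α : Form R D p) : Form R D p :=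
  fun i => ∑ n : Fin p → Fin D, (∏ j, Jc (i j) (n j)) * α n

end FormModel

open FormModel

/-!
Forms embed into the exterior algebra of `R^D`, where wedge products become multiplication and
contractions become compositions of interior products, so that the claim concerns the operators
`L` (multiplication by `ω`) and `Λ` (contraction with `ω`). The Leibniz rule for interior
products, together with `J² = -1` and `Jᵀ J = 1`, gives `Λ L = L Λ + D/2 - k` in degree `k`.
Contraction with `ω ∧ ω` is `Λ²`, which lowers the degree by `4`; moving `L` past both factors
gives `Λ² L = L Λ² + (D/2 - (k - 2)) Λ + (D/2 - k) Λ`.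
-/

namespace FormModel

open ExteriorAlgebra

section Exterior

variable {R : Type} [CommRing R] {D : ℕ}

/-- The exterior algebra of the standard space `R^D`. -/
abbrev Exterior (R : Type) [CommRing R] (D : ℕ) : Type := ExteriorAlgebra R (Fin D → R)

/-- The standard basis vector `e_a` of `R^D`. -/
abbrev basisVec (R : Type) [CommRing R] {D : ℕ} (a : Fin D) : Fin D → R := Pi.single a 1

/-- The interior product `v ⌟ ·` on the exterior algebra, for the Euclidean metric. -/
def interiorProd : (Fin D → R) →ₗ[R] Module.End R (Exterior R D) :=
  CliffordAlgebra.contractLeft ∘ₗ (dotProductEquiv R (Fin D)).toLinearMap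

lemma interiorProd_algebraMap (v : Fin D → R) (r : R) : interiorProd v (algebraMap R _ r) = 0 :=
  CliffordAlgebra.contractLeft_algebraMap ..

lemma interiorProd_ι_mul (v u : Fin D → R) (x : Exterior R D) :
    interiorProd v (ι R u * x) = (v ⬝ᵥ u) • x - ι R u * interiorProd v x :=
  CliffordAlgebra.contractLeft_ι_mul ..

lemma interiorProd_mul_interiorProd_self (v : Fin D → R) :
    interiorProd v * interiorProd v = (0 : Module.End R (Exterior R D)) :=
  LinearMap.ext fun x => CliffordAlgebra.contractLeft_contractLeft _ x

/-- The action of the exterior algebra on itself by contraction. The first factor of a product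
contracts first, so that the action reverses products. -/
def contraction : Exterior R D →ₐ[R] (Module.End R (Exterior R D))ᵐᵒᵖ :=
  ExteriorAlgebra.lift R ⟨(MulOpposite.opLinearEquiv R).toLinearMap ∘ₗ interiorProd, fun v =>
    congrArg MulOpposite.op (interiorProd_mul_interiorProd_self v)⟩

lemma contraction_ι (v : Fin D → R) : (contraction (ι R v)).unop = interiorProd v :=
  congrArg MulOpposite.unop (ExteriorAlgebra.lift_ι_apply ..)

lemma contraction_mul_apply (x y z : Exterior R D) :
    (contraction (x * y)).unop z = (contraction y).unop ((contraction x).unop z) := by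
  rw [map_mul]; rfl

lemma sum_smul_ι_basisVec (v : Fin D → R) : ∑ a, v a • ι R (basisVec R a) = ι R v := by
  simp_rw [← map_smul, ← map_sum, ← pi_eq_sum_univ']

lemma commute_ι_mul_ι (u v : Fin D → R) (x : Exterior R D) : Commute (ι R u * ι R v) x := by
  induction x using ExteriorAlgebra.induction with
  | algebraMap r => exact Algebra.commute_algebraMap_right r _
  | ι w =>
    have anticomm (y z : Fin D → R) : ι R y * ι R z = -(ι R z * ι R y) :=
      eq_neg_of_add_eq_zero_left (ι_add_mul_swap y z)
    calc ι R u * ι R v * ι R w = -(ι R u * ι R w) * ι R v := by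
          rw [mul_assoc, anticomm v w, mul_neg, neg_mul, mul_assoc]
      _ = ι R w * (ι R u * ι R v) := by rw [anticomm u w, neg_neg, mul_assoc]
  | mul x y hx hy => exact hx.mul_right hy
  | add x y hx hy => exact hx.add_right hy

lemma interiorProd_ι_mul_ι_mul (v u w : Fin D → R) (x : Exterior R D) :
    interiorProd v (ι R u * ι R w * x) =
      (v ⬝ᵥ u) • (ι R w * x) - (v ⬝ᵥ w) • (ι R u * x) + ι R u * ι R w * interiorProd v x := by
  rw [mul_assoc, interiorProd_ι_mul, interiorProd_ι_mul, mul_sub, mul_smul_comm, ← mul_assoc]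
  abel

/-- The number operator, which multiplies forms of degree `p` by `p`. -/
def number : Module.End R (Exterior R D) :=
  ∑ a, LinearMap.mulLeft R (ι R (basisVec R a)) * interiorProd (basisVec R a)

lemma number_apply (x : Exterior R D) :
    number x = ∑ a, ι R (basisVec R a) * interiorProd (basisVec R a) x := by
  simp [number]

lemma sum_ι_mul_interiorProd_of_orthogonal {J : Matrix (Fin D) (Fin D) R}
    (hJ : J.transpose * J = 1) (x : Exterior R D) :
    ∑ a, ι R (J a) * interiorProd (J a) x = number x := by
  have expand (a : Fin D) : ι R (J a) * interiorProd (J a) x =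
      ∑ b, ∑ c, (J a b * J a c) • (ι R (basisVec R b) * interiorProd (basisVec R c) x) := by
    conv_lhs => rw [pi_eq_sum_univ' (J a)]
    simp [Finset.sum_mul_sum, smul_smul, mul_comm]
  have orthonormal (b c : Fin D) : ∑ a, J a b * J a c = if b = c then 1 else 0 := by
    simpa [Matrix.mul_apply, Matrix.one_apply] using congrFun₂ hJ b c
  simp_rw [expand]
  rw [Finset.sum_comm_cycle, Finset.sum_comm_cycle]
  simp_rw [← Finset.sum_smul, orthonormal]
  simp [number_apply]

end Exterior

section Lefschetz

variable {R : Type} [Field R] {D : ℕ}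

/-- The element `½ ∑ J_ab e_a ∧ e_b` of the exterior algebra given by a skew-symmetric matrix
`J`: the hermitian form when `J` is an almost complex structure. -/
noncomputable def hermitianElement (J : Matrix (Fin D) (Fin D) R) : Exterior R D :=
  (2 : R)⁻¹ • ∑ a, ι R (basisVec R a) * ι R (J a)

lemma commute_hermitianElement (J : Matrix (Fin D) (Fin D) R) (x : Exterior R D) :
    Commute (hermitianElement J) x :=
  (Commute.sum_left _ _ _ fun _ _ => commute_ι_mul_ι ..).smul_left _

/-- The adjoint Lefschetz operator, contraction with the hermitian form. -/
noncomputable def dualLefschetz (J : Matrix (Fin D) (Fin D) R) : Module.End R (Exterior R D) :=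
  (contraction (hermitianElement J)).unop

lemma dualLefschetz_apply (J : Matrix (Fin D) (Fin D) R) (x : Exterior R D) :
    dualLefschetz J x = (2 : R)⁻¹ • ∑ a, interiorProd (J a) (interiorProd (basisVec R a) x) := by
  simp [dualLefschetz, hermitianElement, contraction_ι]

variable [NeZero (2 : R)] {J : Matrix (Fin D) (Fin D) R}

lemma interiorProd_hermitianElement_mul (hJ : J.transpose = -J) (v : Fin D → R) (x : Exterior R D) :
    interiorProd v (hermitianElement J * x) =
      hermitianElement J * interiorProd v x + ι R (Matrix.vecMul v J) * x := by
  have rows : ∑ a, v a • ι R (J a) = ι R (Matrix.vecMul v J) := by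
    simp_rw [← map_smul, ← map_sum, Matrix.vecMul_eq_sum]
  have columns : ∑ a, (v ⬝ᵥ J a) • ι R (basisVec R a) = -ι R (Matrix.vecMul v J) := by
    rw [← map_neg, ← Matrix.vecMul_neg, ← hJ, Matrix.vecMul_transpose, ← sum_smul_ι_basisVec]
    simp_rw [Matrix.mulVec, dotProduct_comm v]
  simp only [hermitianElement, smul_mul_assoc, map_smul, Finset.sum_mul, map_sum,
    interiorProd_ι_mul_ι_mul, Finset.sum_add_distrib, Finset.sum_sub_distrib]
  simp_rw [← smul_mul_assoc, ← Finset.sum_mul, columns, dotProduct_single_one, rows]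
  have := two_ne_zero (α := R)
  rw [neg_mul]
  match_scalars <;> field_simp
  norm_num

lemma dualLefschetz_hermitianElement_mul (hJ2 : J * J = -1) (hJorth : J.transpose * J = 1)
    (x : Exterior R D) :
    dualLefschetz J (hermitianElement J * x) =
      hermitianElement J * dualLefschetz J x + ((D : R) / 2) • x - number x := by
  have skew : J.transpose = -J := by
    have := congrArg (· * J) hJorth
    simpa [Matrix.mul_assoc, hJ2, neg_eq_iff_eq_neg] using this
  have square_rows (a : Fin D) : Matrix.vecMul (J a) J = -basisVec R a := by
    rw [← Matrix.mul_apply_eq_vecMul, hJ2]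
    ext b
    simp [Matrix.one_apply, Pi.single_apply, eq_comm]
  have norm_rows : ∑ a, J a ⬝ᵥ J a = D := by
    have := congrArg Matrix.trace (mul_eq_one_comm.mp hJorth)
    simpa [Matrix.trace, Matrix.mul_apply, dotProduct] using this
  have summand (a : Fin D) :
      interiorProd (J a) (interiorProd (basisVec R a) (hermitianElement J * x)) =
        hermitianElement J * interiorProd (J a) (interiorProd (basisVec R a) x) + (J a ⬝ᵥ J a) • x
          - ι R (J a) * interiorProd (J a) x
          - ι R (basisVec R a) * interiorProd (basisVec R a) x := by
    rw [interiorProd_hermitianElement_mul skew, map_add, interiorProd_hermitianElement_mul skew,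
      interiorProd_ι_mul, square_rows, Matrix.single_one_vecMul, Matrix.row, map_neg, neg_mul]
    abel
  simp only [dualLefschetz_apply, summand, Finset.sum_sub_distrib, Finset.sum_add_distrib,
    ← Finset.sum_smul, ← Finset.mul_sum, norm_rows, sum_ι_mul_interiorProd_of_orthogonal hJorth,
    ← number_apply, mul_smul_comm]
  have := two_ne_zero (α := R)
  match_scalars <;> field_simp
  norm_num

end Lefschetz

section Components

variable {R : Type} [Field R] {D : ℕ}

/-- The interior product of a form with the basis vector `e_a`, in components. -/
def contrBasis {p : ℕ} (a : Fin D) (α : Form R D (p + 1)) : Form R D p :=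
  fun i => α (Fin.cons a i)

/-- The element `(1/p!) ∑ α_{m₁…m_p} e_{m₁} ∧ … ∧ e_{m_p}` of the exterior algebra with the
components `α`. -/
noncomputable def toExterior {p : ℕ} : Form R D p →ₗ[R] Exterior R D :=
  (p.factorial : R)⁻¹ •
    ∑ m : Fin p → Fin D, (LinearMap.proj m).smulRight (ιMulti R p fun j => basisVec R (m j))

lemma toExterior_apply {p : ℕ} (α : Form R D p) :
    toExterior α = (p.factorial : R)⁻¹ •
      ∑ m : Fin p → Fin D, α m • ιMulti R p fun j => basisVec R (m j) := by
  simp [toExterior]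

lemma toExterior_degree_zero (α : Form R D 0) :
    toExterior α = algebraMap R (Exterior R D) (α ![]) := by
  simp [toExterior_apply, Algebra.algebraMap_eq_smul_one, Subsingleton.elim default ![]]

lemma toExterior_reindex {p q : ℕ} (h : p = q) (α : Form R D p) :
    toExterior (reindex h α) = toExterior α := by
  subst h; rfl

lemma IsAlt.reindex {p q : ℕ} (h : p = q) {α : Form R D p} (hα : IsAlt α) :
    IsAlt (FormModel.reindex h α) := by
  subst h; exact hα

lemma IsAlt.contrBasis {p : ℕ} {α : Form R D (p + 1)} (hα : IsAlt α) (a : Fin D) :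
    IsAlt (contrBasis a α) := by
  intro σ i
  have h := hα (Equiv.Perm.decomposeFin.symm (0, σ)) (Fin.cons a i)
  rw [Equiv.Perm.decomposeFin.symm_sign] at h
  simp only [FormModel.contrBasis]
  rw [if_pos rfl, one_mul] at h
  rw [← h]
  congr 1
  funext k
  refine Fin.cases ?_ (fun k => ?_) k <;> simp

lemma contrBasis_comm {p : ℕ} {α : Form R D (p + 2)} (hα : IsAlt α) (a b : Fin D) :
    contrBasis a (contrBasis b α) = -contrBasis b (contrBasis a α) := by
  funext i
  have h := hα (Equiv.swap 0 1) (Matrix.vecCons b (Matrix.vecCons a i))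
  rw [Matrix.cons_cons_comp_swap_zero_one, Equiv.Perm.sign_swap (by simp)] at h
  simpa [contrBasis, Matrix.vecCons, eq_neg_iff_add_eq_zero, add_comm] using h

lemma IsAlt.contr {k p : ℕ} (α : Form R D k) {β : Form R D (k + p)} (hβ : IsAlt β) :
    IsAlt (FormModel.contr α β) := by
  intro σ n
  have block (m : Fin k → Fin D) :
      β (Fin.append m (n ∘ σ)) = ((Equiv.Perm.sign σ : ℤ) : R) * β (Fin.append m n) := by
    have h := hβ (finSumFinEquiv.permCongr (Equiv.Perm.sumCongr 1 σ)) (Fin.append m n)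
    rw [Equiv.Perm.sign_permCongr, Equiv.Perm.sign_sumCongr, Equiv.Perm.sign_one, one_mul] at h
    rw [← h]
    congr 1
    funext x
    refine Fin.addCases (fun x => ?_) (fun x => ?_) x <;> simp
  simp only [FormModel.contr, block, Finset.mul_sum]
  exact Finset.sum_congr rfl fun _ _ => by ring

lemma IsAlt.add {p : ℕ} {α β : Form R D p} (hα : IsAlt α) (hβ : IsAlt β) : IsAlt (α + β) := by
  intro σ i
  simp only [Pi.add_apply, hα σ i, hβ σ i, mul_add]

lemma IsAlt.smul {p : ℕ} {α : Form R D p} (hα : IsAlt α) (c : R) : IsAlt (c • α) := by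
  intro σ i
  simp only [Pi.smul_apply, hα σ i, smul_eq_mul, mul_left_comm]

lemma isAlt_wedge {p q : ℕ} (α : Form R D p) (β : Form R D q) : IsAlt (wedge α β) := by
  intro τ i
  simp only [wedge, Finset.mul_sum]
  refine Fintype.sum_equiv (Equiv.mulLeft τ) _ _ fun σ => ?_
  rcases Int.units_eq_one_or (Equiv.Perm.sign τ) with h | h <;> simp [h]

lemma sum_sign_smul_ιMulti {p : ℕ} (T : Form R D p) (σ : Equiv.Perm (Fin p)) :
    ∑ i, (((Equiv.Perm.sign σ : ℤ) : R) * T (i ∘ σ)) • ιMulti R p (fun j => basisVec R (i j)) =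
      ∑ i, T i • ιMulti R p fun j => basisVec R (i j) := by
  refine Fintype.sum_equiv (σ.symm.arrowCongr (Equiv.refl (Fin D))) _ _ fun i => ?_
  have permuted := (ιMulti R p).map_perm (fun j => basisVec R (i j)) σ
  change _ = T (i ∘ σ) • ιMulti R p ((fun j => basisVec R (i j)) ∘ σ)
  rw [permuted, mul_smul, smul_comm]
  rcases Int.units_eq_one_or (Equiv.Perm.sign σ) with h | h <;> simp [h]

lemma toExterior_wedge [CharZero R] {p q : ℕ} (α : Form R D p) (β : Form R D q) :
    toExterior (wedge α β) = toExterior α * toExterior β := by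
  let T : Form R D (p + q) := fun i =>
    α (fun j => i (Fin.castAdd q j)) * β (fun j => i (Fin.natAdd p j))
  have wedge_eq (i : Fin (p + q) → Fin D) : wedge α β i =
      ((p.factorial * q.factorial : ℕ) : R)⁻¹ *
        ∑ σ : Equiv.Perm (Fin (p + q)), ((Equiv.Perm.sign σ : ℤ) : R) * T (i ∘ σ) := by
    simp only [wedge, T, mul_assoc, Function.comp_apply]
  have tensor : ∑ i, T i • ιMulti R (p + q) (fun j => basisVec R (i j)) =
      (∑ m, α m • ιMulti R p fun j => basisVec R (m j)) *
        ∑ n, β n • ιMulti R q fun j => basisVec R (n j) := by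
    rw [← (Fin.appendEquiv p q).sum_comp, Fintype.sum_prod_type, Finset.sum_mul_sum]
    refine Finset.sum_congr rfl fun m _ => Finset.sum_congr rfl fun n _ => ?_
    rw [smul_mul_smul_comm, ιMulti_mul_ιMulti]
    simp only [T, Fin.appendEquiv_apply, Fin.append_left, Fin.append_right]
    congr 2
    funext j
    exact j.addCases (by simp) (by simp)
  simp only [toExterior_apply, wedge_eq, mul_smul, Finset.sum_smul, ← Finset.smul_sum]
  rw [Finset.sum_comm]
  simp only [← mul_smul, sum_sign_smul_ιMulti, tensor, Finset.sum_const, Finset.card_univ,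
    Fintype.card_perm, Fintype.card_fin, smul_mul_smul_comm, ← Nat.cast_smul_eq_nsmul R]
  have := Nat.cast_ne_zero (R := R).mpr (p + q).factorial_ne_zero
  congr 1
  push_cast
  field_simp

lemma toExterior_succ {p : ℕ} (α : Form R D (p + 1)) :
    toExterior α =
      ((p + 1 : ℕ) : R)⁻¹ • ∑ a, ι R (basisVec R a) * toExterior (contrBasis a α) := by
  rw [toExterior_apply, ← (Fin.consEquiv fun _ => Fin D).sum_comp, Fintype.sum_prod_type,
    Nat.factorial_succ]
  simp [toExterior_apply, ← Finset.smul_sum, Finset.mul_sum, smul_smul, contrBasis, Fin.consEquiv,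
    Matrix.vecTail, Function.comp_def, mul_comm]

variable [CharZero R]

lemma sum_ι_mul_toExterior_contrBasis {p : ℕ} (α : Form R D (p + 1)) :
    ∑ a, ι R (basisVec R a) * toExterior (contrBasis a α) = ((p + 1 : ℕ) : R) • toExterior α := by
  rw [toExterior_succ, smul_inv_smul₀ (Nat.cast_ne_zero.mpr p.succ_ne_zero)]

lemma interiorProd_toExterior {p : ℕ} {α : Form R D (p + 1)} (hα : IsAlt α) (a : Fin D) :
    interiorProd (basisVec R a) (toExterior α) = toExterior (contrBasis a α) := by
  induction p with
  | zero =>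
    simp [toExterior_succ α, toExterior_degree_zero, interiorProd_ι_mul, interiorProd_algebraMap]
  | succ p ih =>
    have slots (b : Fin D) : interiorProd (basisVec R a) (toExterior (contrBasis b α)) =
        -toExterior (contrBasis b (contrBasis a α)) := by
      rw [ih (hα.contrBasis b), contrBasis_comm hα, map_neg]
    have hp : ((p + 1 + 1 : ℕ) : R) ≠ 0 := Nat.cast_ne_zero.mpr (p + 1).succ_ne_zero
    rw [toExterior_succ α, map_smul, inv_smul_eq_iff₀ hp]
    simp only [map_sum, interiorProd_ι_mul, slots, mul_neg, sub_neg_eq_add, Finset.sum_add_distrib]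
    rw [sum_ι_mul_toExterior_contrBasis]
    simp [Pi.single_apply, add_smul, add_comm]

lemma number_toExterior {p : ℕ} {α : Form R D p} (hα : IsAlt α) :
    number (toExterior α) = (p : R) • toExterior α := by
  cases p with
  | zero => simp [number_apply, toExterior_degree_zero, interiorProd_algebraMap]
  | succ p => simp_rw [number_apply, interiorProd_toExterior hα, sum_ι_mul_toExterior_contrBasis]

lemma IsAlt.eq_of_toExterior_eq {p : ℕ} {α β : Form R D p} (hα : IsAlt α) (hβ : IsAlt β)
    (h : toExterior α = toExterior β) : α = β := by
  induction p with
  | zero =>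
    rw [toExterior_degree_zero, toExterior_degree_zero, algebraMap_inj] at h
    exact funext fun i => by rwa [Subsingleton.elim i ![]]
  | succ p ih =>
    have slices (a : Fin D) : FormModel.contrBasis a α = FormModel.contrBasis a β := by
      refine ih (hα.contrBasis a) (hβ.contrBasis a) ?_
      rw [← interiorProd_toExterior hα, ← interiorProd_toExterior hβ, h]
    funext i
    simpa [FormModel.contrBasis] using congrFun (slices (i 0)) (Fin.tail i)

lemma contraction_ιMulti_toExterior {k p : ℕ} (m : Fin k → Fin D) {β : Form R D (k + p)}
    (hβ : IsAlt β) :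
    (contraction (ιMulti R k fun j => basisVec R (m j))).unop (toExterior β) =
      toExterior fun n => β (Fin.append m n) := by
  induction k with
  | zero =>
    have cast_eq : (fun n => β (Fin.append m n)) = reindex (zero_add p) β := by
      funext n
      rw [Fin.append_left_nil m n rfl]
      rfl
    simp [cast_eq, toExterior_reindex]
  | succ k ih =>
    let β' : Form R D (k + p + 1) := reindex (Nat.add_right_comm k 1 p) β
    have hβ' : IsAlt β' := hβ.reindex _
    have slices : (fun n => β (Fin.append m n)) =
        fun n => contrBasis (m 0) β' (Fin.append (Fin.tail m) n) := by
      funext n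
      conv_lhs => rw [← Fin.cons_self_tail m, Fin.append_cons]
      rfl
    rw [slices, ← ih (Fin.tail m) (hβ'.contrBasis (m 0)), ← interiorProd_toExterior hβ',
      toExterior_reindex, ιMulti_succ_apply, contraction_mul_apply, contraction_ι]
    rfl

lemma toExterior_contr {k p : ℕ} (α : Form R D k) {β : Form R D (k + p)} (hβ : IsAlt β) :
    toExterior (contr α β) = (contraction (toExterior α)).unop (toExterior β) := by
  have contr_eq : contr α β =
      (k.factorial : R)⁻¹ • ∑ m : Fin k → Fin D, α m • fun n => β (Fin.append m n) := by
    funext n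
    simp [contr]
  simp [contr_eq, toExterior_apply α, contraction_ιMulti_toExterior _ hβ]

end Components

section HermitianForm

variable {R : Type} [Field R] {D : ℕ} {J : Matrix (Fin D) (Fin D) R} {ω : Form R D 2}

lemma toExterior_eq_hermitianElement (hω : ∀ i, ω i = J (i 0) (i 1)) :
    toExterior ω = hermitianElement J := by
  simp [toExterior_succ, toExterior_degree_zero, hermitianElement, contrBasis, hω,
    ← Algebra.commutes, ← Algebra.smul_def, sum_smul_ι_basisVec]

variable [CharZero R]

lemma dualLefschetz_toExterior (hω : ∀ i, ω i = J (i 0) (i 1)) {p : ℕ} {β : Form R D (2 + p)}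
    (hβ : IsAlt β) : dualLefschetz J (toExterior β) = toExterior (contr ω β) := by
  rw [toExterior_contr ω hβ, toExterior_eq_hermitianElement hω, dualLefschetz]

lemma toExterior_contr_wedge_self (hω : ∀ i, ω i = J (i 0) (i 1)) {p : ℕ}
    {β : Form R D (2 + 2 + p)} (hβ : IsAlt β) :
    toExterior (contr (wedge ω ω) β) = dualLefschetz J (dualLefschetz J (toExterior β)) := by
  rw [toExterior_contr _ hβ, toExterior_wedge, contraction_mul_apply,
    toExterior_eq_hermitianElement hω, dualLefschetz]

lemma dualLefschetz_toExterior_of_lt_two (J : Matrix (Fin D) (Fin D) R) {p : ℕ} (hp : p < 2)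
    {β : Form R D p} (hβ : IsAlt β) : dualLefschetz J (toExterior β) = 0 := by
  interval_cases p
  · simp [dualLefschetz_apply, toExterior_degree_zero, interiorProd_algebraMap]
  · simp [dualLefschetz_apply, interiorProd_toExterior hβ, toExterior_degree_zero,
      interiorProd_algebraMap]

lemma dualLefschetz_sq_hermitianElement_mul (hJ2 : J * J = -1) (hJorth : J.transpose * J = 1)
    (hω : ∀ i, ω i = J (i 0) (i 1)) {p : ℕ} {β : Form R D (2 + p)} (hβ : IsAlt β) :
    dualLefschetz J (dualLefschetz J (hermitianElement J * toExterior β)) =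
      (2 * ((D : R) / 2 + 1 - (2 + p : ℕ))) • toExterior (contr ω β) +
        hermitianElement J * dualLefschetz J (dualLefschetz J (toExterior β)) := by
  rw [dualLefschetz_hermitianElement_mul hJ2 hJorth, number_toExterior hβ, map_sub, map_add,
    dualLefschetz_hermitianElement_mul hJ2 hJorth, map_smul, map_smul,
    dualLefschetz_toExterior hω hβ, number_toExterior (hβ.contr ω)]
  match_scalars <;> ring

lemma toExterior_contr_wedge_self_wedge (hJ2 : J * J = -1) (hJorth : J.transpose * J = 1)
    (hω : ∀ i, ω i = J (i 0) (i 1)) {k p : ℕ} (h₂ : k = 2 + p) (h₄ : k + 2 = 2 + 2 + p)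
    {α : Form R D k} (hα : IsAlt α) :
    toExterior (contr (wedge ω ω) (reindex h₄ (wedge α ω))) =
      (2 * ((D : R) / 2 + 1 - k)) • toExterior (contr ω (reindex h₂ α)) +
        toExterior ω * dualLefschetz J (toExterior (contr ω (reindex h₂ α))) := by
  subst h₂
  rw [toExterior_contr_wedge_self hω ((isAlt_wedge α ω).reindex h₄), toExterior_reindex,
    toExterior_wedge, toExterior_eq_hermitianElement hω, ← (commute_hermitianElement J _).eq,
    dualLefschetz_sq_hermitianElement_mul hJ2 hJorth hω hα, dualLefschetz_toExterior hω hα]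
  rfl

end HermitianForm

end FormModel

theorem lefschetz_commutator_second_general {R : Type} [Field R] [CharZero R] {D : ℕ}
    {J : Matrix (Fin D) (Fin D) R} (hJ2 : J * J = -1) (hJorth : J.transpose * J = 1)
    {ω : Form R D 2} (hω : ∀ i : Fin 2 → Fin D, ω i = J (i 0) (i 1)) {k p : ℕ}
    (h₂ : k = 2 + p) (h₄ : k + 2 = 2 + 2 + p) {α : Form R D k} (hα : IsAlt α) :
    (∀ (j : ℕ) (hk : k = 2 + 2 + j) (hp : 2 + j = p),
      contr (wedge ω ω) (reindex h₄ (wedge α ω)) =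
        (2 * ((D : R) / 2 + 1 - k)) • contr ω (reindex h₂ α)
          + reindex hp (wedge ω (contr (wedge ω ω) (reindex hk α)))) ∧
    (p < 2 →
      contr (wedge ω ω) (reindex h₄ (wedge α ω)) =
        (2 * ((D : R) / 2 + 1 - k)) • contr ω (reindex h₂ α)) := by
  have hα₂ : IsAlt (reindex h₂ α) := hα.reindex h₂
  have main := toExterior_contr_wedge_self_wedge hJ2 hJorth hω h₂ h₄ hα
  have lhs_alt := ((isAlt_wedge α ω).reindex h₄).contr (wedge ω ω)
  have first_alt := (hα₂.contr ω).smul (2 * ((D : R) / 2 + 1 - k))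
  refine ⟨fun j hk hp => lhs_alt.eq_of_toExterior_eq
    (first_alt.add ((isAlt_wedge ω _).reindex hp)) ?_,
    fun hp => lhs_alt.eq_of_toExterior_eq first_alt ?_⟩
  · rw [main, map_add, map_smul, toExterior_reindex, toExterior_wedge,
      toExterior_contr_wedge_self hω (hα.reindex hk), toExterior_reindex,
      ← dualLefschetz_toExterior hω hα₂, toExterior_reindex]
  · rw [main, dualLefschetz_toExterior_of_lt_two J hp (hα₂.contr ω), mul_zero, add_zero, map_smul]

/-- On a 6-dimensional hermitian vector space, for any `k`-form `α` with `k ≥ 2`,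
`(ω∧ω) ⌟ (α∧ω) = 2(4-k) ω⌟α + ω ∧ ((ω∧ω)⌟α)` (the last term vanishing for `k < 4`). -/
theorem lefschetz_commutator_second (Jm : Matrix (Fin 6) (Fin 6) ℝ)
    (hJ2 : Jm * Jm = -1) (hJorth : Jm.transpose * Jm = 1)
    (ω : Form ℝ 6 2) (hω : ∀ i : Fin 2 → Fin 6, ω i = Jm (i 0) (i 1)) :
    (∀ (j : ℕ) (α : Form ℝ 6 (4 + j)), IsAlt α →
      contr (wedge ω ω) (reindex (show (4 + j) + 2 = 4 + (j + 2) by omega) (wedge α ω)) =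
        (2 * ((4 : ℝ) - ((4 + j : ℕ) : ℝ))) •
            contr ω (reindex (show 4 + j = 2 + (j + 2) by omega) α)
          + reindex (show 2 + j = j + 2 by omega)
              (wedge ω (contr (wedge ω ω) (reindex (show 4 + j = (2 + 2) + j by omega) α)))) ∧
    (∀ α : Form ℝ 6 2, IsAlt α →
      contr (wedge ω ω) (reindex (show 2 + 2 = (2 + 2) + 0 by omega) (wedge α ω)) =
        (2 * ((4 : ℝ) - 2)) • contr ω (reindex (show 2 = 2 + 0 by omega) α)) ∧
    (∀ α : Form ℝ 6 3, IsAlt α →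
      contr (wedge ω ω) (reindex (show 3 + 2 = (2 + 2) + 1 by omega) (wedge α ω)) =
        (2 * ((4 : ℝ) - 3)) • contr ω (reindex (show 3 = 2 + 1 by omega) α)) := by
  have half_dim : ((6 : ℕ) : ℝ) / 2 + 1 = 4 := by norm_num
  have general {k p : ℕ} (h₂ : k = 2 + p) (h₄ : k + 2 = 2 + 2 + p) {α : Form ℝ 6 k}
      (hα : IsAlt α) := lefschetz_commutator_second_general hJ2 hJorth hω h₂ h₄ hα
  simp only [half_dim] at general
  exact ⟨fun j α hα => (general _ (by omega) hα).1 j _ _,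
    fun α hα => (general _ _ hα).2 zero_lt_two,
    fun α hα => (general _ _ hα).2 one_lt_two⟩
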